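/- For every integer t with 1 ≤ t ≤ 9 there exists a linear code over the field with 32 elements of length 40, dimension 3t, minimum distance at least 40 − (4t + 3) = 37 − 4t, and locality 3. In particular (t = 7), there exists a linear code over the field with 32 elements of length 40, dimension 21, minimum distance at least 9, and locality 3. -/

import Mathlib

/-!
Let `ψ` be the `4`-isogeny of `E : y² + xy = x³ + x` onto itself with kernel
`{∞, (0, 0), (1, 0), (1, 1)}`. The words of the code are the functions
`f₀ ∘ ψ + X · (f₁ ∘ ψ) + Y · (f₂ ∘ ψ)` with `fₖ ∈ L(t∞)`, evaluated on ten fibres of `ψ`. On each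
fibre the `fₖ ∘ ψ` are constant, so recovering a value from the other three in its fibre amounts to
these three points not being collinear. They are `Q`, `Q + D`, `Q - D` with `D` of order `4`, so
collinearity would mean `3Q = 0`, which is impossible in a group of order `44`; concretely, the
`3`-division polynomial `x⁴ + x³ + 1` has no root in `𝔽₃₂`. The poles of such a function have total
order at most `4t + 3`, hence so do its zeros. The ten fibres are found as the orbit of a single one
under Frobenius and negation.
-/

namespace EllipticLRC

open Polynomial WeierstrassCurve.Affine
open scoped Polynomial.Bivariate

section ZeroBound

variable {F A ι : Type*} [Field F] [CommRing A] [IsDomain A] [Algebra F A] [Algebra F[X] A]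
  [IsScalarTower F F[X] A] [Finite ι]

theorem finite_quotient_span_singleton (b : Module.Basis ι F[X] A) {f : A} (hf : f ≠ 0) :
    Module.Finite F (A ⧸ Ideal.span {f}) := by
  have := Fintype.ofFinite ι
  have hI : Ideal.span {f} ≠ ⊥ := Ideal.span_singleton_eq_bot.not.2 hf
  exact Module.Finite.equiv (Ideal.quotientEquivDirectSum F b hI).symm

/-- Evaluations killing `f` factor through `A ⧸ (f)`, whose dimension is the degree of the norm. -/
theorem card_le_natDegree_norm (b : Module.Basis ι F[X] A) {f : A} (hf : f ≠ 0)
    {s : Finset (A →ₐ[F] F)} (hs : ∀ φ ∈ s, φ f = 0) :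
    s.card ≤ (Algebra.norm F[X] f).natDegree := by
  have := finite_quotient_span_singleton b hf
  have hker (φ : s) (a : A) (ha : a ∈ Ideal.span {f}) : φ.1 a = 0 := by
    obtain ⟨c, rfl⟩ := Ideal.mem_span_singleton'.1 ha
    rw [map_mul, hs φ.1 φ.2, mul_zero]
  let lift (φ : s) : (A ⧸ Ideal.span {f}) →ₐ[F] F := Ideal.Quotient.liftₐ _ φ.1 (hker φ)
  have lift_injective : Function.Injective lift := fun φ ψ h ↦ Subtype.ext <| AlgHom.ext fun a ↦
    DFunLike.congr_fun h (Ideal.Quotient.mk _ a)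
  calc s.card = Nat.card s := by simp
    _ ≤ Nat.card ((A ⧸ Ideal.span {f}) →ₐ[F] F) := Nat.card_le_card_of_injective lift lift_injective
    _ ≤ Module.finrank F (A ⧸ Ideal.span {f}) := card_algHom_le_finrank F _ F
    _ = (Algebra.norm F[X] f).natDegree := finrank_quotient_span_eq_natDegree_norm b hf

end ZeroBound

section RiemannRoch

variable {F : Type*} [Field F] {W : WeierstrassCurve.Affine F}

variable (W) in
/-- The finite rational points of a Weierstrass curve, singular or not. -/
abbrev FinitePoint : Type _ := {P : F × F // W.Equation P.1 P.2}

/-- Evaluation of regular functions on the affine curve at a finite rational point. -/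
noncomputable def evalAt (P : FinitePoint W) : W.CoordinateRing →ₐ[F] F :=
  AdjoinRoot.liftAlgHom W.polynomial (Polynomial.aeval P.1.1) P.1.2 <|
    (congrFun₂ (eval₂_evalRingHom P.1.1) P.1.2 W.polynomial).trans P.2

theorem evalAt_mk (P : FinitePoint W) (p : F[X][Y]) :
    evalAt P (CoordinateRing.mk W p) = p.evalEval P.1.1 P.1.2 :=
  congrFun₂ (eval₂_evalRingHom P.1.1) P.1.2 p

theorem evalAt_smul (P : FinitePoint W) (p : F[X]) (f : W.CoordinateRing) :
    evalAt P (p • f) = p.eval P.1.1 * evalAt P f := by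
  rw [CoordinateRing.smul, map_mul, evalAt_mk, evalEval_C]

theorem evalAt_mk_Y (P : FinitePoint W) : evalAt P (CoordinateRing.mk W Y) = P.1.2 := by
  rw [evalAt_mk, evalEval_X]

theorem evalAt_injective : Function.Injective (evalAt (W := W)) := fun P Q h ↦ by
  have hX := DFunLike.congr_fun h ((X : F[X]) • (1 : W.CoordinateRing))
  have hY := DFunLike.congr_fun h (CoordinateRing.mk W Y)
  simp only [evalAt_smul, map_one, eval_X, mul_one] at hX
  simp only [evalAt_mk_Y] at hY
  exact Subtype.ext (Prod.ext hX hY)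

variable (W) in
/-- The function `p + q Y` on the curve attached to a pair of polynomials `(p, q)`. -/
noncomputable def ofPair : (F[X] × F[X]) →ₗ[F] W.CoordinateRing :=
  ((LinearMap.toSpanSingleton F[X] _ 1).coprod
    (LinearMap.toSpanSingleton F[X] _ (CoordinateRing.mk W Y))).restrictScalars F

theorem ofPair_apply (p q : F[X]) :
    ofPair W (p, q) = p • (1 : W.CoordinateRing) + q • CoordinateRing.mk W Y := rfl

theorem ofPair_injective : Function.Injective (ofPair W) := by
  rw [← LinearMap.ker_eq_bot, LinearMap.ker_eq_bot']
  rintro ⟨p, q⟩ h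
  obtain ⟨rfl, rfl⟩ := CoordinateRing.smul_basis_eq_zero h
  rfl

variable (W) in
/-- The Riemann–Roch space `L(n∞)` of functions whose only pole is at infinity, of order at most
`n`. As `X` and `Y` have poles of order `2` and `3`, it consists of the functions `p + q Y` with
`2 deg p ≤ n` and `2 deg q + 3 ≤ n`. -/
noncomputable def rrSpace (n : ℕ) : Submodule F W.CoordinateRing :=
  LinearMap.range <| (ofPair W).comp <|
    (degreeLT F (n / 2 + 1)).subtype.prodMap (degreeLT F ((n - 1) / 2)).subtype

theorem ofPair_mem_rrSpace {n : ℕ} {p q : F[X]} : ofPair W (p, q) ∈ rrSpace W n ↔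
    p ∈ degreeLT F (n / 2 + 1) ∧ q ∈ degreeLT F ((n - 1) / 2) := by
  refine ⟨?_, fun ⟨hp, hq⟩ ↦ ⟨(⟨p, hp⟩, ⟨q, hq⟩), rfl⟩⟩
  rintro ⟨⟨p', q'⟩, h⟩
  obtain ⟨rfl, rfl⟩ := Prod.mk.inj (ofPair_injective h)
  exact ⟨p'.2, q'.2⟩

theorem finrank_rrSpace {n : ℕ} (hn : 1 ≤ n) : Module.finrank F (rrSpace W n) = n := by
  have finrank_degreeLT (k : ℕ) : Module.finrank F (degreeLT F k) = k := by
    rw [(degreeLTEquiv F k).finrank_eq, Module.finrank_fin_fun]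
  have (k : ℕ) : Module.Finite F (degreeLT F k) := Module.Finite.equiv (degreeLTEquiv F k).symm
  have injective : Function.Injective ((ofPair W).comp <|
      (degreeLT F (n / 2 + 1)).subtype.prodMap (degreeLT F ((n - 1) / 2)).subtype) :=
    ofPair_injective.comp <| (Submodule.subtype_injective _).prodMap (Submodule.subtype_injective _)
  rw [rrSpace, LinearMap.finrank_range_of_inj injective,
    Module.finrank_prod, finrank_degreeLT, finrank_degreeLT]
  omega

instance (n : ℕ) : Module.Finite F (rrSpace W n) := by
  have (k : ℕ) : Module.Finite F (degreeLT F k) := Module.Finite.equiv (degreeLTEquiv F k).symm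
  exact Module.Finite.range _

theorem mem_rrSpace {n : ℕ} {f : W.CoordinateRing} :
    f ∈ rrSpace W n ↔ (Algebra.norm F[X] f).degree ≤ n := by
  obtain ⟨p, q, rfl⟩ := CoordinateRing.exists_smul_basis_eq f
  rw [← ofPair_apply, ofPair_mem_rrSpace, ofPair_apply, CoordinateRing.degree_norm_smul_basis,
    max_le_iff, mem_degreeLT, mem_degreeLT]
  refine and_congr ?_ ?_
  · rcases eq_or_ne p 0 with rfl | hp
    · simp
    · rw [degree_eq_natDegree hp, nsmul_eq_mul]
      norm_cast
      omega
  · rcases eq_or_ne q 0 with rfl | hq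
    · simp
    · rw [degree_eq_natDegree hq, nsmul_eq_mul]
      norm_cast
      omega

theorem mul_mem_rrSpace {m n : ℕ} {f g : W.CoordinateRing} (hf : f ∈ rrSpace W m)
    (hg : g ∈ rrSpace W n) : f * g ∈ rrSpace W (m + n) := by
  rw [mem_rrSpace] at *
  rw [map_mul, degree_mul, Nat.cast_add]
  exact add_le_add hf hg

theorem rrSpace_mono {m n : ℕ} (h : m ≤ n) : rrSpace W m ≤ rrSpace W n := fun _ hf ↦
  mem_rrSpace.2 <| (mem_rrSpace.1 hf).trans <| by exact_mod_cast h

theorem mk_Y_mem_rrSpace : CoordinateRing.mk W Y ∈ rrSpace W 3 := by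
  have := (ofPair_mem_rrSpace (W := W) (n := 3) (p := 0) (q := 1)).2 <| by
    simp [mem_degreeLT]
  simpa [ofPair_apply] using this

theorem smul_mem_rrSpace {n k : ℕ} {p : F[X]} (hp : p.natDegree ≤ k) {f : W.CoordinateRing}
    (hf : f ∈ rrSpace W n) : p • f ∈ rrSpace W (2 * k + n) := by
  have hp : ofPair W (p, 0) ∈ rrSpace W (2 * k) := ofPair_mem_rrSpace.2
    ⟨mem_degreeLT.2 <| degree_lt_iff_coeff_zero _ _ |>.2 fun m hm ↦
      coeff_eq_zero_of_natDegree_lt (by omega), zero_mem _⟩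
  simpa [ofPair_apply] using mul_mem_rrSpace hp hf

theorem smul_mem_of_X_pow_smul_mem {S : Submodule F W.CoordinateRing} {f : W.CoordinateRing}
    {k : ℕ} (h : ∀ i < k, (X ^ i : F[X]) • f ∈ S) {p : F[X]} (hp : p ∈ degreeLT F k) :
    p • f ∈ S := by
  classical
  suffices degreeLT F k ≤ S.comap ((LinearMap.toSpanSingleton F[X] _ f).restrictScalars F) from
    this hp
  rw [degreeLT_eq_span_X_pow, Submodule.span_le, Finset.coe_image, Set.image_subset_iff]
  exact fun i hi ↦ h i (Finset.mem_range.1 hi)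

theorem rrSpace_le {n : ℕ} {S : Submodule F W.CoordinateRing}
    (h₁ : ∀ i, 2 * i ≤ n → (X ^ i : F[X]) • 1 ∈ S)
    (hY : ∀ i, 2 * i + 3 ≤ n → (X ^ i : F[X]) • CoordinateRing.mk W Y ∈ S) :
    rrSpace W n ≤ S := by
  rintro _ ⟨⟨p, q⟩, rfl⟩
  exact add_mem (smul_mem_of_X_pow_smul_mem (fun i hi ↦ h₁ i (by omega)) p.2)
    (smul_mem_of_X_pow_smul_mem (fun i hi ↦ hY i (by omega)) q.2)

theorem card_zeros_le {n : ℕ} {f : W.CoordinateRing} (hf : f ∈ rrSpace W n) (hf₀ : f ≠ 0)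
    {s : Finset (FinitePoint W)} (hs : ∀ P ∈ s, evalAt P f = 0) : s.card ≤ n := by
  classical
  have := card_le_natDegree_norm (CoordinateRing.basis W) hf₀ (s := s.image evalAt)
    (Finset.forall_mem_image.2 hs)
  rw [Finset.card_image_of_injective _ evalAt_injective] at this
  exact this.trans (natDegree_le_iff_degree_le.2 (mem_rrSpace.1 hf))

end RiemannRoch

section TamoBarg

variable {F L ι κ σ : Type*} [Field F] [AddCommGroup L] [Module F L] [Fintype σ]

/-- The encoder of the Tamo–Barg construction. The message `(fₖ)`, where each `fₖ` is a function on
the base `κ` of a covering `π : ι → κ`, is sent to the word `∑ sₖ · (fₖ ∘ π)`. -/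
def encoder (ev : κ → L →ₗ[F] F) (π : ι → κ) (s : ι → σ → F) : (σ → L) →ₗ[F] (ι → F) :=
  LinearMap.pi fun i ↦ ∑ k, s i k • ev (π i) ∘ₗ LinearMap.proj k

theorem encoder_apply (ev : κ → L →ₗ[F] F) (π : ι → κ) (s : ι → σ → F) (m : σ → L) (i : ι) :
    encoder ev π s m i = ∑ k, s i k * ev (π i) (m k) := by
  simp [encoder]

/-- A choice of positions in the fibre of `i`, different from `i`, on which the functions `sₖ`
interpolate arbitrary values, so that they can be used to recover position `i`. -/
structure IsHelperFamily [DecidableEq σ] (π : ι → κ) (s : ι → σ → F) (i : ι) (h : σ → ι) :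
    Prop where
  map_eq : ∀ k, π (h k) = π i
  ne : ∀ k, h k ≠ i
  det_ne_zero : (Matrix.of fun k ↦ s (h k)).det ≠ 0

variable [DecidableEq σ] {ev : κ → L →ₗ[F] F} {π : ι → κ} {s : ι → σ → F}

theorem IsHelperFamily.eval_eq_zero {i : ι} {h : σ → ι} (hh : IsHelperFamily π s i h) {m : σ → L}
    (hm : ∀ k, encoder ev π s m (h k) = 0) (k : σ) : ev (π i) (m k) = 0 := by
  have mulVec_eq_zero : (Matrix.of fun k ↦ s (h k)).mulVec (fun k ↦ ev (π i) (m k)) = 0 := by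
    funext k
    have := hm k
    rw [encoder_apply, hh.map_eq] at this
    exact this
  exact congrFun (Matrix.eq_zero_of_mulVec_eq_zero hh.det_ne_zero mulVec_eq_zero) k

theorem IsHelperFamily.eq_of_eqOn {i : ι} {h : σ → ι} (hh : IsHelperFamily π s i h) {x y : ι → F}
    (hx : x ∈ LinearMap.range (encoder ev π s)) (hy : y ∈ LinearMap.range (encoder ev π s))
    (hxy : ∀ k, x (h k) = y (h k)) : x i = y i := by
  obtain ⟨m, hm⟩ := sub_mem hx hy
  have zero (k : σ) : encoder ev π s m (h k) = 0 := by
    rw [hm, Pi.sub_apply, hxy, sub_self]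
  rw [← sub_eq_zero, ← Pi.sub_apply, ← hm, encoder_apply]
  exact Finset.sum_eq_zero fun k _ ↦ by rw [hh.eval_eq_zero zero, mul_zero]

theorem encoder_injective (hev : ∀ f, (∀ a, ev a f = 0) → f = 0) (hπ : Function.Surjective π)
    (hh : ∀ i, ∃ h, IsHelperFamily π s i h) : Function.Injective (encoder ev π s) := by
  rw [← LinearMap.ker_eq_bot, LinearMap.ker_eq_bot']
  refine fun m hm ↦ funext fun k ↦ hev _ fun a ↦ ?_
  obtain ⟨i, rfl⟩ := hπ a
  obtain ⟨h, hi⟩ := hh i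
  exact hi.eval_eq_zero (fun k ↦ congrFun hm (h k)) k

theorem finrank_range_encoder [Module.Finite F L] (hev : ∀ f, (∀ a, ev a f = 0) → f = 0)
    (hπ : Function.Surjective π) (hh : ∀ i, ∃ h, IsHelperFamily π s i h) :
    Module.finrank F (LinearMap.range (encoder ev π s)) = Fintype.card σ * Module.finrank F L := by
  rw [LinearMap.finrank_range_of_inj (encoder_injective hev hπ hh), Module.finrank_pi_fintype]
  simp

end TamoBarg

section Curve

variable (F : Type*) [Field F]

/-- The elliptic curve `y² + xy = x³ + x`. -/
def curve : WeierstrassCurve.Affine F := ⟨1, 0, 0, 1, 0⟩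

variable {F}

theorem equation_curve_iff {x y : F} :
    (curve F).Equation x y ↔ y ^ 2 + x * y = x ^ 3 + x := by
  simp [equation_iff, curve]

variable (F) in
/-- The rational points outside the kernel `{∞, (0, 0), (1, 0), (1, 1)}` of the `4`-isogeny, in
characteristic two. -/
@[ext]
structure NonKernelPoint where
  x : F
  y : F
  equation : y ^ 2 + x * y = x ^ 3 + x
  x_ne_zero : x ≠ 0
  x_ne_one : x ≠ 1

namespace NonKernelPoint

variable (P : NonKernelPoint F)

/-- The underlying point of the affine curve. -/
def toFinitePoint : FinitePoint (curve F) := ⟨(P.x, P.y), equation_curve_iff.2 P.equation⟩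

theorem toFinitePoint_injective : Function.Injective (toFinitePoint (F := F)) := fun _ _ h ↦
  have h := Prod.mk.inj (congrArg Subtype.val h)
  NonKernelPoint.ext h.1 h.2

theorem toFinitePoint_y : P.toFinitePoint.1.2 = P.y := rfl

theorem evalAt_smul_toFinitePoint (p : F[X]) (f : (curve F).CoordinateRing) :
    evalAt P.toFinitePoint (p • f) = p.eval P.x * evalAt P.toFinitePoint f := evalAt_smul _ _ _

/-- The values at `P` of `1, X, Y`, the functions which interpolate on the fibres of the isogeny. -/
def coords : Fin 3 → F := ![1, P.x, P.y]

end NonKernelPoint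

/-- The `2`-isogeny of the curve onto itself with kernel `{∞, (0, 0)}`, in characteristic two. It is
defined on all pairs, but meaningful only for nonzero first coordinate. -/
def twoIsogeny (P : F × F) : F × F := (P.1 + P.1⁻¹, P.2 + (P.2 + P.1) / P.1 ^ 2 + 1)

/-- Translation by the kernel point `(0, 0)` of `twoIsogeny`, meaningful only for nonzero first
coordinate. -/
def twoTranslate (P : F × F) : F × F := (P.1⁻¹, (P.1 + P.2) / P.1 ^ 2)

variable [CharP F 2]

theorem twoIsogeny_equation {P : F × F} (hP : P.2 ^ 2 + P.1 * P.2 = P.1 ^ 3 + P.1) (hx : P.1 ≠ 0) :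
    (twoIsogeny P).2 ^ 2 + (twoIsogeny P).1 * (twoIsogeny P).2 =
      (twoIsogeny P).1 ^ 3 + (twoIsogeny P).1 := by
  obtain ⟨x, y⟩ := P
  simp only [twoIsogeny] at *
  field_simp
  grind

theorem twoIsogeny_neg {P : F × F} (hx : P.1 ≠ 0) :
    twoIsogeny (P.1, P.2 + P.1) = ((twoIsogeny P).1, (twoIsogeny P).2 + (twoIsogeny P).1) := by
  ext
  · rfl
  · simp only [twoIsogeny]
    field_simp
    grind

theorem twoIsogeny_twoTranslate {P : F × F} (hx : P.1 ≠ 0) :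
    twoIsogeny (twoTranslate P) = twoIsogeny P := by
  ext
  · simp only [twoIsogeny, twoTranslate]
    rw [inv_inv, add_comm]
  · simp only [twoIsogeny, twoTranslate]
    field_simp
    grind

namespace NonKernelPoint

variable (P : NonKernelPoint F)

theorem add_one_ne_zero : P.x + 1 ≠ 0 := by
  rw [← CharTwo.sub_eq_add]
  exact sub_ne_zero.2 P.x_ne_one

theorem y_ne_zero : P.y ≠ 0 := by
  intro hy
  have h := P.equation
  have : P.x * (P.x + 1) ^ 2 = 0 := by
    rw [hy] at h; grind
  exact mul_ne_zero P.x_ne_zero (pow_ne_zero 2 P.add_one_ne_zero) this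

/-- Translation by the point `D = (1, 0)`, of order four. -/
def translate : NonKernelPoint F where
  x := P.y / (P.x + 1) ^ 2 + 1
  y := (P.y / (P.x + 1) ^ 2 + 1) / (P.x + 1)
  equation := by
    have := P.add_one_ne_zero
    have := P.equation
    field_simp
    grind
  x_ne_zero h := by
    have := P.add_one_ne_zero
    have := P.equation
    field_simp at h
    grind
  x_ne_one := by
    simp [P.y_ne_zero, P.add_one_ne_zero]

theorem translate_x_add_one : P.translate.x + 1 = P.y / (P.x + 1) ^ 2 := by
  simp only [translate, CharTwo.add_cancel_right]

theorem translate_y : P.translate.y = P.translate.x / (P.x + 1) := rfl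

theorem translate_translate_x : P.translate.translate.x = P.x⁻¹ := by
  have := P.add_one_ne_zero
  have := P.equation
  have := P.x_ne_zero
  have := P.y_ne_zero
  have h : P.translate.translate.x = P.translate.x / (P.x + 1) / (P.y / (P.x + 1) ^ 2) ^ 2 + 1 := by
    rw [← translate_x_add_one, ← translate_y]; rfl
  rw [h, translate]
  field_simp
  grind

theorem translate_translate_y : P.translate.translate.y = (P.x + P.y) / P.x ^ 2 := by
  have := P.add_one_ne_zero
  have := P.equation
  have := P.x_ne_zero
  have := P.y_ne_zero
  rw [translate_y, translate_translate_x, translate_x_add_one]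
  field_simp
  grind

theorem translate_iterate_four : translate^[4] P = P := by
  have := P.x_ne_zero
  change P.translate.translate.translate.translate = P
  ext
  · rw [translate_translate_x, translate_translate_x, inv_inv]
  · rw [translate_translate_y, translate_translate_x, translate_translate_y]
    field_simp
    grind

theorem translate_iterate_two_ne : translate^[2] P ≠ P := by
  intro h
  have hx : P.x⁻¹ = P.x := P.translate_translate_x.symm.trans (congrArg x h)
  have := P.x_ne_zero
  have := P.add_one_ne_zero
  field_simp at hx
  grind

theorem minimalPeriod_translate : Function.minimalPeriod translate P = 4 :=
  Function.minimalPeriod_eq_prime_pow (p := 2) (k := 1) P.translate_iterate_two_ne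
    P.translate_iterate_four

theorem translate_iterate_three_x : (translate^[3] P).x = (P.x + P.y) / (P.x + 1) ^ 2 + 1 := by
  have := P.x_ne_zero
  have := P.add_one_ne_zero
  have h : (translate^[3] P).x = P.translate.translate.y / (P.translate.translate.x + 1) ^ 2 + 1 :=
    rfl
  rw [h, translate_translate_x, translate_translate_y]
  field_simp
  grind

theorem translate_iterate_three_y :
    (translate^[3] P).y = (translate^[3] P).x * P.x / (P.x + 1) := by
  have := P.x_ne_zero
  have := P.add_one_ne_zero
  have h : (translate^[3] P).y = (translate^[3] P).x / (P.translate.translate.x + 1) := rfl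
  rw [h, translate_translate_x]
  field_simp
  grind

/-- The points are `P`, `P + D` and `P - D` for `D = (1, 0)`, which are collinear only if `3P = 0`;
the numerator is the `3`-division polynomial. -/
theorem det_coords_translate :
    (Matrix.of fun k : Fin 3 ↦ (translate^[![0, 1, 3] k] P).coords).det =
      (P.x ^ 4 + P.x ^ 3 + 1) / (P.x + 1) ^ 3 := by
  have := P.x_ne_zero
  have := P.add_one_ne_zero
  have := P.equation
  simp only [Matrix.det_fin_three, Matrix.of_apply, coords, Matrix.cons_val,
    translate_iterate_three_y, translate_iterate_three_x, Function.iterate_zero, id,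
    Function.iterate_one, translate]
  field_simp
  grind

theorem twoIsogeny_x : (twoIsogeny (P.x, P.y)).1 = (P.x + 1) ^ 2 / P.x := by
  have := P.x_ne_zero
  simp only [twoIsogeny]
  field_simp
  grind

theorem twoIsogeny_x_ne_zero : (twoIsogeny (P.x, P.y)).1 ≠ 0 := by
  rw [twoIsogeny_x]
  exact div_ne_zero (pow_ne_zero 2 P.add_one_ne_zero) P.x_ne_zero

theorem twoIsogeny_translate :
    twoIsogeny (P.translate.x, P.translate.y) = twoTranslate (twoIsogeny (P.x, P.y)) := by
  have := P.x_ne_zero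
  have := P.add_one_ne_zero
  have := P.equation
  have hx : P.translate.x * (P.x + 1) ^ 2 = P.y + (P.x + 1) ^ 2 := by
    simp only [translate]; field_simp
  have := P.translate.x_ne_zero
  ext
  · rw [twoTranslate, twoIsogeny_x, twoIsogeny_x, translate_x_add_one]
    field_simp
    grind
  · rw [twoTranslate, twoIsogeny_x, twoIsogeny, twoIsogeny, translate_y]
    field_simp
    grind

/-- The `4`-isogeny whose kernel is generated by `(1, 0)`, as the square of `twoIsogeny`. -/
def fourIsogeny : FinitePoint (curve F) :=
  ⟨twoIsogeny (twoIsogeny (P.x, P.y)), equation_curve_iff.2 <|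
    twoIsogeny_equation (twoIsogeny_equation P.equation P.x_ne_zero) P.twoIsogeny_x_ne_zero⟩

theorem fourIsogeny_translate : P.translate.fourIsogeny = P.fourIsogeny := by
  simp only [fourIsogeny, twoIsogeny_translate, twoIsogeny_twoTranslate P.twoIsogeny_x_ne_zero]

theorem fourIsogeny_translate_iterate (n : ℕ) : (translate^[n] P).fourIsogeny = P.fourIsogeny := by
  induction n with
  | zero => rfl
  | succ n ih => rw [Function.iterate_succ_apply', fourIsogeny_translate, ih]

theorem fourIsogeny_x :
    P.fourIsogeny.1.1 * (P.x * (P.x + 1) ^ 2) = P.x ^ 4 + P.x ^ 2 + 1 := by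
  have := P.x_ne_zero
  have := P.add_one_ne_zero
  simp only [fourIsogeny]
  rw [twoIsogeny, twoIsogeny_x]
  field_simp
  grind

theorem fourIsogeny_y : P.fourIsogeny.1.2 * (P.x ^ 2 * (P.x + 1) ^ 3) =
    (P.x ^ 3 + P.x ^ 2 + P.x) + ((P.x + 1) + P.x ^ 2 * (P.x + 1) ^ 3) * P.y := by
  have := P.x_ne_zero
  have := P.add_one_ne_zero
  simp only [fourIsogeny]
  rw [twoIsogeny, twoIsogeny_x, twoIsogeny]
  field_simp
  grind

end NonKernelPoint

end Curve

section Pullback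

variable (F : Type*) [Field F]

/-- The kernel point `(0, 0)` of the isogenies. -/
def originPoint : FinitePoint (curve F) := ⟨(0, 0), equation_curve_iff.2 (by simp)⟩

/-- The common denominator of the pullbacks of `L(t∞)` along the `4`-isogeny. It vanishes to order
`2⌈t/2⌉` at `(0, 0)` and `t` at `(1, 0)` and `(1, 1)`. -/
noncomputable def pullbackDenom (t : ℕ) : F[X] := X ^ ((t + 1) / 2) * (X + 1) ^ t

variable {F}

theorem eval_pullbackDenom (t : ℕ) (x : F) :
    (pullbackDenom F t).eval x = x ^ ((t + 1) / 2) * (x + 1) ^ t := by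
  simp [pullbackDenom]

theorem eval_pullbackDenom_ne_zero [CharP F 2] (t : ℕ) (P : NonKernelPoint F) :
    (pullbackDenom F t).eval P.x ≠ 0 := by
  rw [eval_pullbackDenom]
  exact mul_ne_zero (pow_ne_zero _ P.x_ne_zero) (pow_ne_zero _ P.add_one_ne_zero)

variable [CharP F 2]

/-- `g` is the pullback of `f ∈ L(t∞)` along the `4`-isogeny, multiplied by `pullbackDenom F t`. For
odd `t` the order of the denominator at `(0, 0)` is `t + 1`, so that `g` vanishes there. -/
structure IsPullback (t : ℕ) (f g : (curve F).CoordinateRing) : Prop where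
  mem : g ∈ rrSpace (curve F) (4 * t + t % 2)
  evalAt_originPoint : Odd t → evalAt (originPoint F) g = 0
  evalAt_toFinitePoint : ∀ P : NonKernelPoint F, evalAt P.toFinitePoint g =
    (pullbackDenom F t).eval P.x * evalAt P.fourIsogeny f

variable (F) in
/-- The functions whose pullback along the `4`-isogeny, multiplied by `pullbackDenom F t`, is a
function as in `IsPullback`. -/
def pullbackSpace (t : ℕ) : Submodule F (curve F).CoordinateRing where
  carrier := {f | ∃ g, IsPullback t f g}
  zero_mem' := ⟨0, zero_mem _, fun _ ↦ map_zero _, fun P ↦ by simp⟩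
  add_mem' := by
    rintro f₁ f₂ ⟨g₁, hg₁⟩ ⟨g₂, hg₂⟩
    refine ⟨g₁ + g₂, add_mem hg₁.mem hg₂.mem, fun ht ↦ ?_, fun P ↦ ?_⟩
    · rw [map_add, hg₁.evalAt_originPoint ht, hg₂.evalAt_originPoint ht, add_zero]
    · rw [map_add, map_add, hg₁.evalAt_toFinitePoint, hg₂.evalAt_toFinitePoint, mul_add]
  smul_mem' := by
    rintro c f ⟨g, hg⟩
    refine ⟨c • g, Submodule.smul_mem _ c hg.mem, fun ht ↦ ?_, fun P ↦ ?_⟩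
    · rw [map_smul, hg.evalAt_originPoint ht, smul_zero]
    · rw [map_smul, map_smul, hg.evalAt_toFinitePoint, mul_smul_comm]

theorem one_mem_pullbackSpace : 1 ∈ pullbackSpace F 0 := by
  refine ⟨1, ?_, fun h ↦ by simp at h, fun P ↦ by simp [eval_pullbackDenom]⟩
  simpa [ofPair_apply] using
    (ofPair_mem_rrSpace (W := curve F) (p := 1) (q := 0) (n := 0)).2 (by simp [mem_degreeLT])

theorem mk_Y_mem_pullbackSpace : CoordinateRing.mk (curve F) Y ∈ pullbackSpace F 3 := by
  refine ⟨ofPair _ (X ^ 3 + X ^ 2 + X, X + 1 + X ^ 2 * (X + 1) ^ 3), ?_, fun _ ↦ ?_, fun P ↦ ?_⟩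
  · rw [ofPair_mem_rrSpace, mem_degreeLT, mem_degreeLT]
    constructor <;> refine lt_of_le_of_lt (b := _) (by compute_degree) (by norm_num)
  · rw [ofPair_apply, map_add, evalAt_smul, evalAt_smul, evalAt_mk_Y]
    simp [originPoint]
  · rw [ofPair_apply, map_add, P.evalAt_smul_toFinitePoint, P.evalAt_smul_toFinitePoint, map_one,
      evalAt_mk_Y, evalAt_mk_Y, eval_pullbackDenom]
    simp only [NonKernelPoint.toFinitePoint, eval_add, eval_mul, eval_pow, eval_X, eval_one,
      mul_one]
    linear_combination -P.fourIsogeny_y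

theorem X_smul_mem_pullbackSpace {t : ℕ} {f : (curve F).CoordinateRing}
    (hf : f ∈ pullbackSpace F t) : (X : F[X]) • f ∈ pullbackSpace F (t + 2) := by
  obtain ⟨g, hg⟩ := hf
  refine ⟨(X ^ 4 + X ^ 2 + 1 : F[X]) • g, ?_, fun ht ↦ ?_, fun P ↦ ?_⟩
  · have := smul_mem_rrSpace (p := X ^ 4 + X ^ 2 + 1) (k := 4) (by compute_degree) hg.mem
    exact rrSpace_mono (by omega) this
  · rw [evalAt_smul, hg.evalAt_originPoint (by grind), mul_zero]
  · rw [P.evalAt_smul_toFinitePoint, evalAt_smul, hg.evalAt_toFinitePoint, eval_pullbackDenom,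
      eval_pullbackDenom, eval_X, show (t + 2 + 1) / 2 = (t + 1) / 2 + 1 by omega]
    simp only [eval_add, eval_pow, eval_X, eval_one]
    rw [← P.fourIsogeny_x]
    ring

theorem pullbackSpace_le_succ (t : ℕ) : pullbackSpace F t ≤ pullbackSpace F (t + 1) := by
  rintro f ⟨g, hg⟩
  rcases t.even_or_odd with ht | ht
  · refine ⟨(X * (X + 1) : F[X]) • g, ?_, fun _ ↦ ?_, fun P ↦ ?_⟩
    · have := smul_mem_rrSpace (p := X * (X + 1)) (k := 2) (by compute_degree) hg.mem
      exact rrSpace_mono (by grind) this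
    · simp [evalAt_smul, originPoint]
    · rw [P.evalAt_smul_toFinitePoint, hg.evalAt_toFinitePoint, eval_pullbackDenom,
        eval_pullbackDenom, show (t + 1 + 1) / 2 = (t + 1) / 2 + 1 by grind]
      simp only [eval_mul, eval_add, eval_X, eval_one]
      ring
  · refine ⟨(X + 1 : F[X]) • g, ?_, fun ht' ↦ ?_, fun P ↦ ?_⟩
    · have := smul_mem_rrSpace (p := X + 1) (k := 1) (by compute_degree) hg.mem
      exact rrSpace_mono (by grind) this
    · grind
    · rw [P.evalAt_smul_toFinitePoint, hg.evalAt_toFinitePoint, eval_pullbackDenom,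
        eval_pullbackDenom, show (t + 1 + 1) / 2 = (t + 1) / 2 by grind]
      simp only [eval_add, eval_X, eval_one]
      ring

theorem X_pow_smul_mem_pullbackSpace {t : ℕ} {f : (curve F).CoordinateRing}
    (hf : f ∈ pullbackSpace F t) (i : ℕ) : (X ^ i : F[X]) • f ∈ pullbackSpace F (2 * i + t) := by
  induction i with
  | zero => simpa using hf
  | succ i ih =>
    rw [pow_succ', mul_smul, show 2 * (i + 1) + t = 2 * i + t + 2 by ring]
    exact X_smul_mem_pullbackSpace ih

theorem rrSpace_le_pullbackSpace (t : ℕ) : rrSpace (curve F) t ≤ pullbackSpace F t := by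
  have mono : Monotone (pullbackSpace F) := monotone_nat_of_le_succ pullbackSpace_le_succ
  exact rrSpace_le
    (fun i hi ↦ mono hi (X_pow_smul_mem_pullbackSpace one_mem_pullbackSpace i))
    (fun i hi ↦ mono hi (X_pow_smul_mem_pullbackSpace mk_Y_mem_pullbackSpace i))

/-- The common denominator is cleared: `g` is `pullbackDenom F t` times the function
`f₀ ∘ ψ + X · (f₁ ∘ ψ) + Y · (f₂ ∘ ψ)`. For odd `t` the bound on the pole exceeds `4t + 3` by one,
which the zero at `(0, 0)` makes up for. -/
theorem exists_mem_rrSpace_evalAt_eq {t : ℕ} {f : Fin 3 → (curve F).CoordinateRing}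
    (hf : ∀ k, f k ∈ rrSpace (curve F) t) :
    ∃ g ∈ rrSpace (curve F) (4 * t + t % 2 + 3), (Odd t → evalAt (originPoint F) g = 0) ∧
      ∀ P : NonKernelPoint F, evalAt P.toFinitePoint g =
        (pullbackDenom F t).eval P.x * ∑ k, P.coords k * evalAt P.fourIsogeny (f k) := by
  choose g hg using fun k ↦ rrSpace_le_pullbackSpace t (hf k)
  refine ⟨g 0 + (X : F[X]) • g 1 + CoordinateRing.mk (curve F) Y * g 2,
    add_mem (add_mem ?_ ?_) ?_, fun ht ↦ ?_, fun P ↦ ?_⟩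
  · exact rrSpace_mono (by omega) (hg 0).mem
  · exact rrSpace_mono (by omega) (smul_mem_rrSpace (k := 1) natDegree_X_le (hg 1).mem)
  · exact rrSpace_mono (by omega) (mul_mem_rrSpace mk_Y_mem_rrSpace (hg 2).mem)
  · simp [evalAt_smul, (hg _).evalAt_originPoint ht]
  · simp only [map_add, map_mul, NonKernelPoint.evalAt_smul_toFinitePoint, evalAt_mk_Y, eval_X,
      (hg _).evalAt_toFinitePoint, Fin.sum_univ_three, NonKernelPoint.coords, Matrix.cons_val,
      NonKernelPoint.toFinitePoint_y]
    ring

theorem card_zeros_sum_coords_mul_le {t : ℕ} {f : Fin 3 → (curve F).CoordinateRing}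
    (hf : ∀ k, f k ∈ rrSpace (curve F) t) {P₀ : NonKernelPoint F}
    (hP₀ : ∑ k, P₀.coords k * evalAt P₀.fourIsogeny (f k) ≠ 0) {s : Finset (NonKernelPoint F)}
    (hs : ∀ P ∈ s, ∑ k, P.coords k * evalAt P.fourIsogeny (f k) = 0) :
    s.card ≤ 4 * t + 3 := by
  classical
  obtain ⟨g, g_mem, evalAt_origin, evalAt_g⟩ := exists_mem_rrSpace_evalAt_eq hf
  have g_ne_zero : g ≠ 0 := by
    rintro rfl
    exact mul_ne_zero (eval_pullbackDenom_ne_zero t P₀) hP₀ <|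
      (evalAt_g P₀).symm.trans (map_zero _)
  have zeros : ∀ Q ∈ s.image NonKernelPoint.toFinitePoint, evalAt Q g = 0 :=
    Finset.forall_mem_image.2 fun P hP ↦ by rw [evalAt_g, hs P hP, mul_zero]
  rw [← Finset.card_image_of_injective s NonKernelPoint.toFinitePoint_injective]
  rcases t.even_or_odd with ht | ht
  · exact (card_zeros_le g_mem g_ne_zero zeros).trans (by grind)
  · have origin_notMem : originPoint F ∉ s.image NonKernelPoint.toFinitePoint := by
      simp only [Finset.mem_image, not_exists, not_and]
      exact fun P _ h ↦ P.x_ne_zero (congrArg (fun Q : FinitePoint (curve F) ↦ Q.1.1) h)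
    have card_le := card_zeros_le g_mem g_ne_zero
      (Finset.forall_mem_insert _ _ _ |>.2 ⟨evalAt_origin ht, zeros⟩)
    rw [Finset.card_insert_of_notMem origin_notMem] at card_le
    grind

end Pullback

section Code

variable {F : Type*} [Field F] [CharP F 2]

namespace NonKernelPoint

/-- The fibre of the `4`-isogeny through `P`, enumerated by the powers of the translation. -/
def fibre (P : NonKernelPoint F) (m : Fin 4) : NonKernelPoint F := translate^[m] P

theorem fourIsogeny_fibre (P : NonKernelPoint F) (m : Fin 4) :
    (P.fibre m).fourIsogeny = P.fourIsogeny := fourIsogeny_translate_iterate P m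

theorem fibre_add (P : NonKernelPoint F) (m n : Fin 4) : P.fibre (m + n) = (P.fibre m).fibre n := by
  rw [fibre, fibre, fibre, ← Function.iterate_add_apply, add_comm, Fin.val_add]
  exact Function.IsPeriodicPt.iterate_mod_apply P.translate_iterate_four _

theorem fibre_injective (P : NonKernelPoint F) : Function.Injective P.fibre := fun m n h ↦ by
  have injOn := Function.iterate_injOn_Iio_minimalPeriod (f := translate) (x := P)
  rw [minimalPeriod_translate] at injOn
  exact Fin.ext (injOn m.2 n.2 h)

end NonKernelPoint

variable {ι κ : Type*} {B : κ → NonKernelPoint F} {e : ι ≃ κ × Fin 4} {t : ℕ}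

/-- The points of the fibres of the `4`-isogeny through the points `B a`, labelled by `ι`. -/
def fibrePoint (B : κ → NonKernelPoint F) (e : ι ≃ κ × Fin 4) (i : ι) : NonKernelPoint F :=
  (B (e i).1).fibre (e i).2

theorem fibrePoint_injective (hB : Function.Injective fun a ↦ (B a).fourIsogeny) :
    Function.Injective (fibrePoint B e) := fun i j h ↦ by
  have h₁ : (e i).1 = (e j).1 := hB <| by
    simpa only [fibrePoint, NonKernelPoint.fourIsogeny_fibre] using
      congrArg NonKernelPoint.fourIsogeny h
  rw [fibrePoint, fibrePoint, h₁] at h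
  exact e.injective (Prod.ext h₁ ((B (e j).1).fibre_injective h))

theorem exists_isHelperFamily (h₃ : ∀ x : F, x ^ 4 + x ^ 3 + 1 ≠ 0) (i : ι) :
    ∃ h, IsHelperFamily (fun i ↦ (e i).1) (fun i ↦ (fibrePoint B e i).coords) i h := by
  obtain ⟨⟨a, m⟩, rfl⟩ := e.symm.surjective i
  refine ⟨fun k : Fin 3 ↦ e.symm (a, m + 2 + ![0, 1, 3] k), fun k ↦ by simp, fun k h ↦ ?_, ?_⟩
  · have add_ne : ∀ (m : Fin 4) (k : Fin 3), m + 2 + ![0, 1, 3] k ≠ m := by decide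
    exact add_ne m k (Prod.mk.inj (e.symm.injective h)).2
  · let Q := (B a).fibre (m + 2)
    have fibre_eq (k : Fin 3) :
        (B a).fibre (m + 2 + ![0, 1, 3] k) = NonKernelPoint.translate^[![0, 1, 3] k] Q := by
      rw [NonKernelPoint.fibre_add]
      fin_cases k <;> rfl
    simp only [fibrePoint, Equiv.apply_symm_apply, fibre_eq]
    rw [Q.det_coords_translate]
    exact div_ne_zero (h₃ _) (pow_ne_zero 3 Q.add_one_ne_zero)

/-- The evaluations of `L(t∞)` at the images of the points `B a` under the `4`-isogeny. -/
noncomputable def baseEval (B : κ → NonKernelPoint F) (t : ℕ) (a : κ) :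
    rrSpace (curve F) t →ₗ[F] F :=
  (evalAt (B a).fourIsogeny).toLinearMap ∘ₗ Submodule.subtype _

theorem eq_zero_of_baseEval_eq_zero [Fintype κ]
    (hB : Function.Injective fun a ↦ (B a).fourIsogeny) (ht : t < Fintype.card κ)
    (f : rrSpace (curve F) t) (hf : ∀ a, baseEval B t a f = 0) : f = 0 := by
  classical
  by_contra hf₀
  have := card_zeros_le f.2 (by simpa using hf₀) (s := Finset.univ.image fun a ↦ (B a).fourIsogeny)
    (Finset.forall_mem_image.2 fun a _ ↦ hf a)
  rw [Finset.card_image_of_injective _ hB, Finset.card_univ] at this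
  omega

/-- The code of length `4 · #κ` whose words are `1 · (f₀ ∘ ψ) + X · (f₁ ∘ ψ) + Y · (f₂ ∘ ψ)` with
`fₖ ∈ L(t∞)`, where `ψ` is the `4`-isogeny, evaluated on the fibres of `ψ` through the `B a`. -/
noncomputable def fibreCode (B : κ → NonKernelPoint F) (e : ι ≃ κ × Fin 4) (t : ℕ) :
    Submodule F (ι → F) :=
  LinearMap.range <|
    encoder (baseEval B t) (fun i ↦ (e i).1) (fun i ↦ (fibrePoint B e i).coords)

theorem finrank_fibreCode [Fintype κ] (h₃ : ∀ x : F, x ^ 4 + x ^ 3 + 1 ≠ 0)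
    (hB : Function.Injective fun a ↦ (B a).fourIsogeny) (ht₁ : 1 ≤ t) (ht : t < Fintype.card κ) :
    Module.finrank F (fibreCode B e t) = 3 * t := by
  have fst_surjective : Function.Surjective fun i ↦ (e i).1 :=
    Prod.fst_surjective.comp e.surjective
  rw [fibreCode, finrank_range_encoder (eq_zero_of_baseEval_eq_zero hB ht) fst_surjective
    (exists_isHelperFamily h₃), finrank_rrSpace ht₁, Fintype.card_fin]

theorem card_le_hammingNorm_add [Fintype ι] [DecidableEq F]
    (hB : Function.Injective fun a ↦ (B a).fourIsogeny) {x : ι → F} (hx : x ∈ fibreCode B e t)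
    (hx₀ : x ≠ 0) : Fintype.card ι ≤ hammingNorm x + (4 * t + 3) := by
  classical
  obtain ⟨f, rfl⟩ := hx
  set x := encoder (baseEval B t) (fun i ↦ (e i).1) (fun i ↦ (fibrePoint B e i).coords) f
  have x_apply (i : ι) : x i = ∑ k, (fibrePoint B e i).coords k *
      evalAt (fibrePoint B e i).fourIsogeny (f k : (curve F).CoordinateRing) := by
    rw [fibrePoint, NonKernelPoint.fourIsogeny_fibre]
    exact encoder_apply ..
  have card_zeros : (Finset.univ.filter fun i ↦ x i = 0).card ≤ 4 * t + 3 := by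
    obtain ⟨i₀, hi₀⟩ := Function.ne_iff.1 hx₀
    rw [x_apply] at hi₀
    rw [← Finset.card_image_of_injective _ (fibrePoint_injective hB (e := e))]
    refine card_zeros_sum_coords_mul_le (fun k ↦ (f k).2) hi₀ <|
      Finset.forall_mem_image.2 fun i hi ↦ ?_
    rw [← x_apply]
    exact (Finset.mem_filter.1 hi).2
  calc Fintype.card ι
      = (Finset.univ.filter fun i ↦ x i = 0).card + hammingNorm x :=
        (Finset.card_filter_add_card_filter_not _).symm
    _ ≤ hammingNorm x + (4 * t + 3) := by rw [add_comm]; gcongr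

theorem exists_recovery_set (h₃ : ∀ x : F, x ^ 4 + x ^ 3 + 1 ≠ 0) (i : ι) :
    ∃ I : Finset ι, i ∉ I ∧ I.card ≤ 3 ∧ ∀ x ∈ fibreCode B e t, ∀ y ∈ fibreCode B e t,
      (∀ j ∈ I, x j = y j) → x i = y i := by
  classical
  obtain ⟨h, hh⟩ := exists_isHelperFamily (B := B) (e := e) h₃ i
  refine ⟨Finset.univ.image h, ?_, Finset.card_image_le, fun x hx y hy hxy ↦ ?_⟩
  · simpa using hh.ne
  · exact hh.eq_of_eqOn hx hy fun k ↦ hxy _ (Finset.mem_image_of_mem h (Finset.mem_univ k))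

end Code

section Conjugates

variable {F : Type*} [Field F] [CharP F 2]

namespace NonKernelPoint

/-- The image of a point under a field homomorphism, applied to both coordinates. -/
def map (φ : F →+* F) (P : NonKernelPoint F) : NonKernelPoint F where
  x := φ P.x
  y := φ P.y
  equation := by simpa using congrArg φ P.equation
  x_ne_zero := (map_ne_zero φ).2 P.x_ne_zero
  x_ne_one := (map_ne_one_iff φ φ.injective).2 P.x_ne_one

/-- The inverse of a point in the group law, in characteristic two. -/
def neg (P : NonKernelPoint F) : NonKernelPoint F where
  x := P.x
  y := P.y + P.x
  equation := by have := P.equation; grind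
  x_ne_zero := P.x_ne_zero
  x_ne_one := P.x_ne_one

theorem fourIsogeny_map (φ : F →+* F) (P : NonKernelPoint F) :
    (P.map φ).fourIsogeny.1 = Prod.map φ φ P.fourIsogeny.1 := by
  simp [fourIsogeny, twoIsogeny, map]

theorem fourIsogeny_neg (P : NonKernelPoint F) :
    P.neg.fourIsogeny.1 = (P.fourIsogeny.1.1, P.fourIsogeny.1.2 + P.fourIsogeny.1.1) := by
  simp only [fourIsogeny, neg]
  rw [twoIsogeny_neg (P := (P.x, P.y)) P.x_ne_zero, twoIsogeny_neg P.twoIsogeny_x_ne_zero]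

/-- The images of `±P` under the powers of Frobenius, with `true` standing for the sign `+`. -/
def conjugates (P : NonKernelPoint F) (a : Fin 5 × Bool) : NonKernelPoint F :=
  (bif a.2 then P else P.neg).map (iterateFrobenius F 2 a.1)

theorem fourIsogeny_conjugates_x (P : NonKernelPoint F) (a : Fin 5 × Bool) :
    (P.conjugates a).fourIsogeny.1.1 = (frobenius F 2)^[a.1] P.fourIsogeny.1.1 := by
  rw [← coe_iterateFrobenius, conjugates, fourIsogeny_map]
  cases a.2
  · simp [fourIsogeny_neg]
  · simp

end NonKernelPoint

end Conjugates

section CardThirtyTwo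

variable {F : Type*} [Field F] [Fintype F]

theorem eq_one_of_pow_eq_one {n : ℕ} (hn : n.Coprime (Fintype.card F - 1)) {x : F} (hx : x ≠ 0)
    (h : x ^ n = 1) : x = 1 :=
  (pow_eq_one_iff_of_coprime hn).1 ⟨h, FiniteField.pow_card_sub_one_eq_one x hx⟩

theorem exists_eval_eq_zero_of_dvd_X_pow_card_sub_X {p : F[X]} (hp : p.degree ≠ 0)
    (h : p ∣ X ^ Fintype.card F - X) : ∃ x, p.eval x = 0 := by
  have splits : (X ^ Fintype.card F - X : F[X]).Splits := by
    simpa using (FiniteField.isSplittingField_sub F F).splits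
  have ne_zero : (X ^ Fintype.card F - X : F[X]) ≠ 0 :=
    FiniteField.X_pow_card_sub_X_ne_zero F Fintype.one_lt_card
  exact (splits.of_dvd ne_zero h).exists_eval_eq_zero hp

theorem pow_thirtyTwo_eq_self {A : Type*} [CommRing A] (h₂ : (2 : A) = 0) {a : A}
    (ha : a ^ 5 + a ^ 2 + 1 = 0) : a ^ 32 = a := by
  have h₈ : a ^ 8 = a ^ 3 + a ^ 2 + 1 := by grind
  have h₁₆ : a ^ 16 = a ^ 4 + a ^ 3 + a + 1 := by
    rw [show a ^ 16 = (a ^ 8) ^ 2 by ring, h₈]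
    grind
  rw [show a ^ 32 = (a ^ 16) ^ 2 by ring, h₁₆]
  grind

variable [CharP F 2]

theorem pow_four_add_pow_three_add_one_ne_zero (hF : Fintype.card F = 32) (x : F) :
    x ^ 4 + x ^ 3 + 1 ≠ 0 := by
  intro h
  have x_ne_zero : x ≠ 0 := by grind
  have pow_eq_one : x ^ 15 = 1 := by grind
  have x_eq_one : x = 1 := eq_one_of_pow_eq_one (by rw [hF]; decide) x_ne_zero pow_eq_one
  grind

theorem sq_add_self_add_one_ne_zero (hF : Fintype.card F = 32) (x : F) : x ^ 2 + x + 1 ≠ 0 := by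
  intro h
  have x_ne_zero : x ≠ 0 := by grind
  have pow_eq_one : x ^ 3 = 1 := by grind
  have x_eq_one : x = 1 := eq_one_of_pow_eq_one (by rw [hF]; decide) x_ne_zero pow_eq_one
  grind

theorem geom_sum_five_ne_zero (hF : Fintype.card F = 32) (x : F) :
    x ^ 4 + x ^ 3 + x ^ 2 + x + 1 ≠ 0 := by
  intro h
  have x_ne_zero : x ≠ 0 := by grind
  have pow_eq_one : x ^ 5 = 1 := by grind
  have x_eq_one : x = 1 := eq_one_of_pow_eq_one (by rw [hF]; decide) x_ne_zero pow_eq_one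
  grind

theorem exists_pow_five_add_sq_add_one_eq_zero (hF : Fintype.card F = 32) :
    ∃ a : F, a ^ 5 + a ^ 2 + 1 = 0 := by
  let p : F[X] := X ^ 5 + X ^ 2 + 1
  have degree_p : p.degree = 5 := by simp only [p]; compute_degree!
  have two_eq_zero : (2 : AdjoinRoot p) = 0 := by
    rw [← map_ofNat (AdjoinRoot.of p), CharTwo.two_eq_zero, map_zero]
  have root_eq : AdjoinRoot.root p ^ 5 + AdjoinRoot.root p ^ 2 + 1 = 0 := by
    simpa only [p, map_add, map_pow, map_one, AdjoinRoot.mk_X] using AdjoinRoot.mk_self (f := p)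
  have dvd : p ∣ X ^ Fintype.card F - X := by
    rw [← AdjoinRoot.mk_eq_zero, hF, map_sub, map_pow, AdjoinRoot.mk_X,
      pow_thirtyTwo_eq_self two_eq_zero root_eq, sub_self]
  simpa [p] using exists_eval_eq_zero_of_dvd_X_pow_card_sub_X (by simp [degree_p]) dvd

namespace NonKernelPoint

theorem nonempty (hF : Fintype.card F = 32) : Nonempty (NonKernelPoint F) := by
  obtain ⟨a, ha⟩ := exists_pow_five_add_sq_add_one_eq_zero hF
  exact ⟨⟨a, a ^ 4 + a ^ 3 + a ^ 2, by grind, by grind, by grind⟩⟩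

variable (P : NonKernelPoint F)

theorem fourIsogeny_x_ne_zero (hF : Fintype.card F = 32) : P.fourIsogeny.1.1 ≠ 0 := by
  intro h
  have := P.fourIsogeny_x
  have : (P.x ^ 2 + P.x + 1) ^ 2 = 0 := by grind
  exact sq_add_self_add_one_ne_zero hF P.x (pow_eq_zero_iff two_ne_zero |>.1 this)

theorem fourIsogeny_x_ne_one (hF : Fintype.card F = 32) : P.fourIsogeny.1.1 ≠ 1 := by
  intro h
  have := P.fourIsogeny_x
  exact geom_sum_five_ne_zero hF P.x (by grind)

theorem minimalPeriod_frobenius_fourIsogeny_x (hF : Fintype.card F = 32) :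
    Function.minimalPeriod (frobenius F 2) P.fourIsogeny.1.1 = 5 := by
  have : Fact (Nat.Prime 5) := ⟨Nat.prime_five⟩
  refine Function.minimalPeriod_eq_prime ?_ fun hfix ↦ ?_
  · rw [Function.IsPeriodicPt, Function.IsFixedPt, iterate_frobenius]
    exact (congrArg (P.fourIsogeny.1.1 ^ ·) hF).symm.trans (FiniteField.pow_card _)
  · have hfix : P.fourIsogeny.1.1 ^ 2 = P.fourIsogeny.1.1 := hfix
    have := P.fourIsogeny_x_ne_zero hF
    exact P.fourIsogeny_x_ne_one hF (by grind)

theorem fourIsogeny_conjugates_injective (hF : Fintype.card F = 32) :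
    Function.Injective fun a ↦ (P.conjugates a).fourIsogeny := by
  rintro ⟨i, a⟩ ⟨j, b⟩ h
  have h : (P.conjugates (i, a)).fourIsogeny.1 = (P.conjugates (j, b)).fourIsogeny.1 :=
    congrArg Subtype.val h
  obtain rfl : i = j := by
    have injOn := Function.iterate_injOn_Iio_minimalPeriod (f := frobenius F 2)
      (x := P.fourIsogeny.1.1)
    rw [P.minimalPeriod_frobenius_fourIsogeny_x hF] at injOn
    have hx := congrArg Prod.fst h
    rw [fourIsogeny_conjugates_x, fourIsogeny_conjugates_x] at hx
    exact Fin.ext (injOn i.2 j.2 hx)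
  have := P.fourIsogeny_x_ne_zero hF
  rw [conjugates, conjugates, fourIsogeny_map, fourIsogeny_map] at h
  have h := (Prod.map_injective.2 ⟨(iterateFrobenius F 2 i).injective,
    (iterateFrobenius F 2 i).injective⟩) h
  cases a <;> cases b <;> simp_all [fourIsogeny_neg, Prod.ext_iff]

end NonKernelPoint

end CardThirtyTwo

end EllipticLRC

theorem exists_LRC_F32_length40 :
    ∀ t : ℕ, 1 ≤ t → t ≤ 9 →
      ∃ C : Submodule (GaloisField 2 5) (Fin 40 → GaloisField 2 5),
        Module.finrank (GaloisField 2 5) C = 3 * t ∧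
        (∀ x : Fin 40 → GaloisField 2 5, x ∈ C → x ≠ 0 →
          37 - 4 * t ≤ Nat.card {i : Fin 40 // x i ≠ 0}) ∧
        (∀ i : Fin 40, ∃ I : Finset (Fin 40), i ∉ I ∧ I.card ≤ 3 ∧
          ∀ x ∈ C, ∀ y ∈ C, (∀ j ∈ I, x j = y j) → x i = y i) := by
  classical
  intro t ht₁ ht₉
  have := Fintype.ofFinite (GaloisField 2 5)
  have hF : Fintype.card (GaloisField 2 5) = 32 := by
    rw [← Nat.card_eq_fintype_card, GaloisField.card 2 5 (by norm_num)]
    norm_num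
  obtain ⟨P⟩ := EllipticLRC.NonKernelPoint.nonempty hF
  let e : Fin 40 ≃ (Fin 5 × Bool) × Fin 4 := Fintype.equivOfCardEq (by simp)
  have hP := P.fourIsogeny_conjugates_injective hF
  have h₃ := EllipticLRC.pow_four_add_pow_three_add_one_ne_zero hF
  refine ⟨EllipticLRC.fibreCode P.conjugates e t,
    EllipticLRC.finrank_fibreCode h₃ hP ht₁ (by simpa using by omega), fun x hx hx₀ ↦ ?_,
    EllipticLRC.exists_recovery_set h₃⟩
  have card_le := EllipticLRC.card_le_hammingNorm_add hP hx hx₀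
  rw [Fintype.card_fin] at card_le
  rw [Nat.card_eq_fintype_card, Fintype.card_subtype]
  change 37 - 4 * t ≤ hammingNorm x
  omega
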